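/- Let G be a full DAG with a fixed ample framing. Then the gentle algebra Λ(G) is of finite representation type, and every indecomposable Λ(G)-module has dimension at most one at every vertex of the quiver. -/

import Mathlib

/-- A finite directed acyclic multigraph. -/
structure DAG where
  V : Type
  E : Type
  [fintypeV : Fintype V]
  [fintypeE : Fintype E]
  [decEqV : DecidableEq V]
  [decEqE : DecidableEq E]
  src : E → V
  tgt : E → V
  acyclic : ∀ v : V,
    ¬ Relation.TransGen (fun a b : V => ∃ e : E, src e = a ∧ tgt e = b) v v

attribute [instance] DAG.fintypeV DAG.fintypeE DAG.decEqV DAG.decEqE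

namespace DAG

variable (G : DAG)

/-- A vertex with no incoming edges. -/
def IsSource (v : G.V) : Prop := ∀ e : G.E, G.tgt e ≠ v

/-- A vertex with no outgoing edges. -/
def IsSink (v : G.V) : Prop := ∀ e : G.E, G.src e ≠ v

/-- An inner vertex is neither a source nor a sink. -/
def IsInner (v : G.V) : Prop := ¬ G.IsSource v ∧ ¬ G.IsSink v

instance : DecidablePred G.IsSource := fun v =>
  decidable_of_iff (∀ e : G.E, G.tgt e ≠ v) Iff.rfl

instance : DecidablePred G.IsSink := fun v =>
  decidable_of_iff (∀ e : G.E, G.src e ≠ v) Iff.rfl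

instance : DecidablePred G.IsInner := fun v =>
  decidable_of_iff (¬ G.IsSource v ∧ ¬ G.IsSink v) Iff.rfl

/-- In-degree: the number of edges with target `v`. -/
def indeg (v : G.V) : ℕ := Fintype.card {e : G.E // G.tgt e = v}

/-- Out-degree: the number of edges with source `v`. -/
def outdeg (v : G.V) : ℕ := Fintype.card {e : G.E // G.src e = v}

/-- A DAG is full if every inner vertex has in-degree 2 and out-degree 2. -/
def Full : Prop := ∀ v : G.V, G.IsInner v → G.indeg v = 2 ∧ G.outdeg v = 2

/-- A route: a maximal directed path, i.e. a nonempty list of consecutive edges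
starting at a source and ending at a sink. -/
structure Route where
  edges : List G.E
  ne : edges ≠ []
  chain : edges.Chain' (fun e f => G.tgt e = G.src f)
  source_start : G.IsSource (G.src (edges.head ne))
  sink_end : G.IsSink (G.tgt (edges.getLast ne))

/-- A route visits a vertex if the vertex is an endpoint of one of its edges. -/
def Route.visits (R : G.Route) (v : G.V) : Prop :=
  ∃ e ∈ R.edges, G.src e = v ∨ G.tgt e = v

/-- A framing: a linear order on the incoming edges and a linear order on the
outgoing edges of every inner vertex. -/
structure Framing where
  inlt : G.E → G.E → Prop
  outlt : G.E → G.E → Prop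
  inlt_tgt : ∀ {e f}, inlt e f → G.tgt e = G.tgt f
  inlt_inner : ∀ {e f}, inlt e f → G.IsInner (G.tgt e)
  inlt_irrefl : ∀ e, ¬ inlt e e
  inlt_trans : ∀ {e f g}, inlt e f → inlt f g → inlt e g
  inlt_total : ∀ e f, G.tgt e = G.tgt f → G.IsInner (G.tgt e) → e ≠ f →
    inlt e f ∨ inlt f e
  outlt_src : ∀ {e f}, outlt e f → G.src e = G.src f
  outlt_inner : ∀ {e f}, outlt e f → G.IsInner (G.src e)
  outlt_irrefl : ∀ e, ¬ outlt e e
  outlt_trans : ∀ {e f g}, outlt e f → outlt f g → outlt e g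
  outlt_total : ∀ e f, G.src e = G.src f → G.IsInner (G.src e) → e ≠ f →
    outlt e f ∨ outlt f e

/-- The induced order on paths ending at a common vertex: compare the two edges
just before the longest common suffix. -/
def inPathLt (F : G.Framing) (P Q : List G.E) : Prop :=
  ∃ (p q s : List G.E) (e f : G.E), e ≠ f ∧
    P = p ++ e :: s ∧ Q = q ++ f :: s ∧ F.inlt e f

/-- The induced order on paths starting at a common vertex: compare the two edges
just after the longest common prefix. -/
def outPathLt (F : G.Framing) (P Q : List G.E) : Prop :=
  ∃ (s p q : List G.E) (e f : G.E), e ≠ f ∧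
    P = s ++ e :: p ∧ Q = s ++ f :: q ∧ F.outlt e f

/-- Routes `P` and `Q` are in conflict (with `P` playing the first role) if they
pass through a common inner vertex `v` with `Pv ≺ Qv` in the in-order and
`vQ ≺ vP` in the out-order. -/
def Conflict (F : G.Framing) (P Q : G.Route) : Prop :=
  ∃ (v : G.V) (a b c d : List G.E) (ea ec : G.E),
    P.edges = a ++ [ea] ++ b ∧ Q.edges = c ++ [ec] ++ d ∧
    G.tgt ea = v ∧ G.tgt ec = v ∧ b ≠ [] ∧ d ≠ [] ∧
    G.inPathLt F (a ++ [ea]) (c ++ [ec]) ∧ G.outPathLt F d b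

/-- Two routes are coherent if they are not in conflict at any common inner
vertex (in either order). -/
def CoherentPair (F : G.Framing) (P Q : G.Route) : Prop :=
  ¬ G.Conflict F P Q ∧ ¬ G.Conflict F Q P

/-- A route is exceptional if it is coherent with every route. -/
def Exceptional (F : G.Framing) (R : G.Route) : Prop :=
  ∀ S : G.Route, G.CoherentPair F R S

/-- An edge is idle if it is the unique incoming or the unique outgoing edge of
an inner vertex. -/
def Idle (e : G.E) : Prop :=
  (G.IsInner (G.tgt e) ∧ ∀ f : G.E, G.tgt f = G.tgt e → f = e) ∨
  (G.IsInner (G.src e) ∧ ∀ f : G.E, G.src f = G.src e → f = e)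

/-- A framing is ample if every non-idle edge lies on an exceptional route. -/
def Ample (F : G.Framing) : Prop :=
  ∀ e : G.E, ¬ G.Idle e → ∃ R : G.Route, G.Exceptional F R ∧ e ∈ R.edges

/-- `e` is smallest among the edges entering its target. -/
def MinIn (F : G.Framing) (e : G.E) : Prop :=
  ∀ f : G.E, G.tgt f = G.tgt e → f ≠ e → F.inlt e f

/-- `e` is largest among the edges entering its target. -/
def MaxIn (F : G.Framing) (e : G.E) : Prop :=
  ∀ f : G.E, G.tgt f = G.tgt e → f ≠ e → F.inlt f e

/-- `e` is smallest among the edges leaving its source. -/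
def MinOut (F : G.Framing) (e : G.E) : Prop :=
  ∀ f : G.E, G.src f = G.src e → f ≠ e → F.outlt e f

/-- `e` is largest among the edges leaving its source. -/
def MaxOut (F : G.Framing) (e : G.E) : Prop :=
  ∀ f : G.E, G.src f = G.src e → f ≠ e → F.outlt f e

/-- The characteristic vector of a route. -/
noncomputable def charVec (R : G.Route) : G.E → ℝ :=
  fun e => if e ∈ R.edges then 1 else 0

end DAG
namespace DAG

variable (G : DAG)

-- The `{1,2}`-weight of an edge induced by an ample framing: weight `1` if
-- the edge is minimal in the framing orders at its (inner) endpoints, and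
-- weight `2` otherwise.
open Classical in
noncomputable def weight (F : G.Framing) (e : G.E) : ℕ :=
  if (G.IsInner (G.tgt e) → G.MinIn F e) ∧ (G.IsInner (G.src e) → G.MinOut F e)
  then 1 else 2

/-- The vertices of the quiver `Q` of `Λ(G)`: the inner vertices of `G`. -/
def InnerV := {v : G.V // G.IsInner v}

/-- The source of the quiver arrow determined by an edge of `G` between inner
vertices: the edge itself if it has weight 1, the reversed edge otherwise. -/
noncomputable def arrowSrc (F : G.Framing) (e : G.E)
    (hs : G.IsInner (G.src e)) (ht : G.IsInner (G.tgt e)) : G.InnerV :=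
  if G.weight F e = 1 then ⟨G.src e, hs⟩ else ⟨G.tgt e, ht⟩

/-- The target of the quiver arrow determined by an edge of `G` between inner
vertices. -/
noncomputable def arrowTgt (F : G.Framing) (e : G.E)
    (hs : G.IsInner (G.src e)) (ht : G.IsInner (G.tgt e)) : G.InnerV :=
  if G.weight F e = 1 then ⟨G.tgt e, ht⟩ else ⟨G.src e, hs⟩

/-- A (finite dimensional) module over the gentle algebra `Λ(G) = KQ/I`,
presented as a representation of the quiver `Q` satisfying the relations:
the composite along any length-two path of `Q` whose two arrows come from
edges of different weights vanishes. -/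
structure Rep (F : G.Framing) (K : Type) [Field K] where
  space : G.InnerV → Type
  [acg : ∀ v, AddCommGroup (space v)]
  [mod : ∀ v, Module K (space v)]
  [fd : ∀ v, FiniteDimensional K (space v)]
  map : ∀ (e : G.E) (hs : G.IsInner (G.src e)) (ht : G.IsInner (G.tgt e)),
    space (G.arrowSrc F e hs ht) →ₗ[K] space (G.arrowTgt F e hs ht)
  rel : ∀ (e₁ e₂ : G.E) (hs₁ : G.IsInner (G.src e₁)) (ht₁ : G.IsInner (G.tgt e₁))
    (hs₂ : G.IsInner (G.src e₂)) (ht₂ : G.IsInner (G.tgt e₂))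
    (h : G.arrowTgt F e₁ hs₁ ht₁ = G.arrowSrc F e₂ hs₂ ht₂),
    G.weight F e₁ ≠ G.weight F e₂ →
    ∀ x, map e₂ hs₂ ht₂ (cast (congrArg space h) (map e₁ hs₁ ht₁ x)) = 0

attribute [instance] Rep.acg Rep.mod Rep.fd

variable {G} in
/-- A morphism of representations of the quiver with relations. -/
structure RepHom {F : G.Framing} {K : Type} [Field K] (M N : G.Rep F K) where
  app : ∀ v : G.InnerV, M.space v →ₗ[K] N.space v
  comm : ∀ (e : G.E) (hs : G.IsInner (G.src e)) (ht : G.IsInner (G.tgt e))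
    (x : M.space (G.arrowSrc F e hs ht)),
    app (G.arrowTgt F e hs ht) (M.map e hs ht x) =
      N.map e hs ht (app (G.arrowSrc F e hs ht) x)

variable {G} in
/-- Two representations are isomorphic if there is a morphism which is
bijective at every vertex. -/
def RepIso {F : G.Framing} {K : Type} [Field K] (M N : G.Rep F K) : Prop :=
  ∃ φ : RepHom M N, ∀ v : G.InnerV, Function.Bijective (φ.app v)

variable {G} in
/-- A representation is indecomposable iff it is nonzero and its only
idempotent endomorphisms are `0` and the identity. -/
def Indecomposable {F : G.Framing} {K : Type} [Field K] (M : G.Rep F K) : Prop :=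
  (∃ (v : G.InnerV) (x : M.space v), x ≠ 0) ∧
  ∀ φ : RepHom M M,
    (∀ (v : G.InnerV) (x : M.space v), φ.app v (φ.app v x) = φ.app v x) →
    (∀ (v : G.InnerV) (x : M.space v), φ.app v x = 0) ∨
    (∀ (v : G.InnerV) (x : M.space v), φ.app v x = x)

/-- The set `T(Λ(G))`: isomorphism classes of indecomposable `Λ(G)`-modules
together with one shifted projective `P_i[1]` for each vertex `i` of the
quiver. -/
def TLambda (F : G.Framing) (K : Type) [Field K] : Type 1 :=
  Quot (fun M N : {M : G.Rep F K // Indecomposable M} => RepIso M.1 N.1) ⊕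
    G.InnerV

end DAG

/-!
Every edge `i → j` of `G` is read as a linear relation between the spaces of a module at `i` and
`j`: the graph of the module's map if the weight is `1`, the inverse of the graph otherwise. Then
both weights play the same role, and since the edges sharing a source or a target have different
weights, the relations of `Λ(G)` say that a string coming in through an edge of `G` can only
continue through an edge going out. That distinct edges at a vertex have different weights is where
ampleness enters: a route that is coherent with all routes is minimal among the incoming edges
wherever it is minimal among the outgoing edges, or it would be in conflict with a route that
differs from it on both sides.

Strings are therefore directed paths of `G`. They visit each vertex at most once, and there are
finitely many of them. To split a string off a nonzero module, start at a minimal vertex in its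
support with the subquotient `L / N = V / 0` and push it forward along the edges for as long as
possible. At the vertex where it dies along all edges, choose a vector of `L` and a functional
vanishing on `N`, and lift both back along the path. The resulting rank one operators form an
idempotent endomorphism, which is the identity if the module is indecomposable.
-/

theorem wellFounded_swap_of_acyclic {α : Type*} [Finite α] {r : α → α → Prop}
    (hr : ∀ a, ¬ Relation.TransGen r a a) : WellFounded (Function.swap r) := by
  have : Std.Irrefl (Function.swap (Relation.TransGen r)) := ⟨hr⟩
  have : IsTrans α (Function.swap (Relation.TransGen r)) := ⟨fun _ _ _ hab hbc => hbc.trans hab⟩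
  exact Subrelation.wf (fun h => .single h)
    (Finite.wellFounded_of_trans_of_irrefl (Function.swap (Relation.TransGen r)))

theorem wellFounded_of_acyclic {α : Type*} [Finite α] {r : α → α → Prop}
    (hr : ∀ a, ¬ Relation.TransGen r a a) : WellFounded r :=
  wellFounded_swap_of_acyclic (r := Function.swap r) fun a h => hr a (Relation.transGen_swap.1 h)

theorem existsUnique_ne_of_card_fiber_eq_two {α β : Type*} {φ : α → β} {a : α}
    (h : Nat.card {b // φ b = φ a} = 2) : ∃! b, b ≠ a ∧ φ b = φ a := by
  obtain ⟨⟨b, hb⟩, hne, huniq⟩ := (Nat.card_eq_two_iff' ⟨a, rfl⟩).1 h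
  refine ⟨b, ⟨fun hba => hne (Subtype.ext hba), hb⟩, fun c ⟨hca, hc⟩ => ?_⟩
  exact congrArg Subtype.val (huniq ⟨c, hc⟩ fun hca' => hca (congrArg Subtype.val hca'))

theorem finite_quot_of_invariant {α β : Type*} [Finite β] {r : α → α → Prop} (f : α → β)
    (hf : ∀ a b, f a = f b → r a b) : Finite (Quot r) := by
  refine Finite.of_injective (fun q : Quot r => f q.out) fun q q' h => ?_
  rw [← Quot.out_eq q, ← Quot.out_eq q']
  exact Quot.sound (hf _ _ h)

theorem exists_upperBound_of_total {ι α : Type*} [PartialOrder α] [OrderBot α] {S : Set ι}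
    (hS : S.Finite) {f : ι → α} (htotal : ∀ a b, f a ≤ f b ∨ f b ≤ f a) {P : α → Prop}
    (hbot : P ⊥) (hP : ∀ a ∈ S, P (f a)) : ∃ D, P D ∧ ∀ a ∈ S, f a ≤ D := by
  rcases S.eq_empty_or_nonempty with rfl | hne
  · exact ⟨⊥, hbot, by simp⟩
  · obtain ⟨m, hmS, hmax⟩ := hS.exists_maximalFor f S hne
    exact ⟨f m, hP m hmS, fun a ha => (htotal a m).elim id (hmax ha)⟩

theorem smulRight_apply_of_eq_zero_iff {K V W : Type*} [Field K] [AddCommGroup V] [Module K V]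
    [AddCommGroup W] [Module K W] {ξ : Module.Dual K V} {x : V} {x' : W}
    (hx : ∀ y, ξ y • x = y) (hxx' : x = 0 ↔ x' = 0) : ξ.smulRight x' x = x' := by
  rcases eq_or_ne x 0 with h | h
  · rw [hxx'.1 h, h, map_zero]
  · have hξx : ξ x = 1 := smul_left_injective K h (by simpa using hx x)
    rw [LinearMap.smulRight_apply, hξx, one_smul]

section Separation

variable {K V : Type*} [Field K] [AddCommGroup V] [Module K V]

/-- A vector of `L` together with a functional that vanishes on `N` and takes the value `1` on it:
a line splitting off the subquotient `L / (N ⊓ L)`. -/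
structure Separates (N L : Submodule K V) (p : V × Module.Dual K V) : Prop where
  mem : p.1 ∈ L
  le_ker : N ≤ LinearMap.ker p.2
  eval : p.2 p.1 = 1

theorem exists_separates_of_notMem {N L : Submodule K V} {x : V} (hL : x ∈ L) (hN : x ∉ N) :
    ∃ ξ : Module.Dual K V, Separates N L (x, ξ) := by
  obtain ⟨f, hfx, hf⟩ := Submodule.exists_le_ker_of_notMem hN
  refine ⟨(f x)⁻¹ • f, hL, fun y hy => ?_, by simp [hfx]⟩
  have : f y = 0 := hf hy
  simp [this]

/-- `L / N` does not jump inside any interval `[κ a, δ a]`, so it jumps in a gap of the chain that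
they form, and the line is split off there. -/
theorem exists_separates_of_pairwise_le {ι : Type*} [Finite ι] {κ δ : ι → Submodule K V}
    (hκδ : ∀ a, κ a ≤ δ a) (hchain : Pairwise fun a b => δ a ≤ κ b ∨ δ b ≤ κ a)
    {N L : Submodule K V} (hNL : N ≤ L) (hLN : ¬ L ≤ N) (hjump : ∀ a, L ⊓ δ a ≤ N ⊔ κ a) :
    ∃ p, Separates N L p ∧ ∀ a, p.1 ∈ κ a ∨ δ a ≤ LinearMap.ker p.2 := by
  have modular (X : Submodule K V) : L ⊓ (N ⊔ X) = N ⊔ L ⊓ X := by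
    rw [inf_comm, sup_inf_assoc_of_le X hNL, inf_comm]
  have hδ (a) (ha : L ⊓ κ a ≤ N) : L ⊓ δ a ≤ N := calc
    L ⊓ δ a ≤ L ⊓ (N ⊔ κ a) := le_inf inf_le_left (hjump a)
    _ = N ⊔ L ⊓ κ a := modular _
    _ ≤ N := sup_le le_rfl ha
  have totalδ (a b) : δ a ≤ δ b ∨ δ b ≤ δ a := by
    rcases eq_or_ne a b with rfl | hab
    · exact .inl le_rfl
    · exact (hchain hab).imp (·.trans (hκδ b)) (·.trans (hκδ a))
  have totalκ (a b) : κ b ≤ κ a ∨ κ a ≤ κ b := by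
    rcases eq_or_ne a b with rfl | hab
    · exact .inl le_rfl
    · exact (hchain hab).symm.imp (hκδ b).trans (hκδ a).trans
  obtain ⟨D, hD, hδD⟩ := exists_upperBound_of_total (Set.toFinite {a | L ⊓ κ a ≤ N}) (f := δ)
    (P := fun D => L ⊓ D ≤ N) totalδ (by simp) hδ
  obtain ⟨X, hX, hXκ⟩ := exists_upperBound_of_total (α := (Submodule K V)ᵒᵈ)
    (Set.toFinite {a | ¬ L ⊓ κ a ≤ N}) (f := κ) (P := fun X => ¬ L ⊓ X ≤ N)
    totalκ (by change ¬ L ⊓ ⊤ ≤ N; rwa [inf_top_eq]) (fun _ ha => ha)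
  obtain ⟨x, ⟨hxL, hxX⟩, hxN⟩ := SetLike.not_le_iff_exists.1 hX
  have hxND : x ∉ N ⊔ D := fun hx =>
    hxN (sup_le le_rfl hD ((modular D).le ⟨hxL, hx⟩))
  obtain ⟨ξ, hξ⟩ := exists_separates_of_notMem hxL hxND
  refine ⟨(x, ξ), ⟨hxL, le_sup_left.trans hξ.le_ker, hξ.eval⟩, fun a => ?_⟩
  by_cases ha : L ⊓ κ a ≤ N
  · exact .inr ((hδD a ha).trans (le_sup_right.trans hξ.le_ker))
  · exact .inl (hXκ a ha hxX)

end Separation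

/-! ### Linear relations -/

/-- A linear relation between two vector spaces. -/
abbrev LinRel (K V W : Type*) [Field K] [AddCommGroup V] [Module K V] [AddCommGroup W]
    [Module K W] : Type _ :=
  Submodule K (V × W)

namespace LinRel

variable {K V W : Type*} [Field K] [AddCommGroup V] [Module K V] [AddCommGroup W] [Module K W]

/-- The inverse relation. -/
def swap (R : LinRel K V W) : LinRel K W V :=
  R.comap (LinearEquiv.prodComm K W V : W × V →ₗ[K] V × W)

/-- The vectors related to some vector. -/
def dom (R : LinRel K V W) : Submodule K V :=
  R.map (LinearMap.fst K V W)

/-- The vectors related to `0`. -/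
def ker (R : LinRel K V W) : Submodule K V :=
  R.comap (LinearMap.inl K V W)

/-- The vectors to which some vector of `N` is related. -/
def image (R : LinRel K V W) (N : Submodule K V) : Submodule K W :=
  (R ⊓ N.comap (LinearMap.fst K V W)).map (LinearMap.snd K V W)

variable {R : LinRel K V W} {N L : Submodule K V} {p : V × Module.Dual K V}
  {q : W × Module.Dual K W}

theorem mem_swap {y : V} {z : W} : (z, y) ∈ R.swap ↔ (y, z) ∈ R := Iff.rfl

theorem swap_swap : R.swap.swap = R := rfl

theorem mem_dom {y : V} : y ∈ R.dom ↔ ∃ z, (y, z) ∈ R := by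
  simp [dom]

theorem mem_ker {y : V} : y ∈ R.ker ↔ (y, 0) ∈ R := Iff.rfl

theorem mem_image {z : W} : z ∈ R.image N ↔ ∃ y ∈ N, (y, z) ∈ R := by
  simp [image, and_comm]

theorem ker_le_dom : R.ker ≤ R.dom := fun _ hy => mem_dom.2 ⟨0, hy⟩

theorem image_mono (h : N ≤ L) : R.image N ≤ R.image L := fun _ hz =>
  let ⟨y, hy, hyz⟩ := mem_image.1 hz
  mem_image.2 ⟨y, h hy, hyz⟩

theorem inf_dom_le_sup_ker (h : R.image L ≤ R.image N) : L ⊓ R.dom ≤ N ⊔ R.ker := by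
  rintro y ⟨hyL, hy⟩
  obtain ⟨z, hyz⟩ := mem_dom.1 hy
  obtain ⟨n, hn, hnz⟩ := mem_image.1 (h (mem_image.2 ⟨y, hyL, hyz⟩))
  have hker : y - n ∈ R.ker := by simpa [mem_ker] using R.sub_mem hyz hnz
  exact Submodule.mem_sup.2 ⟨n, hn, y - n, hker, by abel⟩

/-- Two pairs (vector, functional) whose vectors are related by `R` and whose functionals agree
along `R`: the string spanned by the vectors passes through the edge carrying `R`. -/
structure Follows (R : LinRel K V W) (p : V × Module.Dual K V) (q : W × Module.Dual K W) :
    Prop where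
  mem : (p.1, q.1) ∈ R
  eval : ∀ {y z}, (y, z) ∈ R → p.2 y = q.2 z

/-- The rank one operator `y ↦ p.2 y • p.1` maps the domain of `R` to its kernel: the string
through `p` does not enter the edge carrying `R`. -/
def Avoids (R : LinRel K V W) (p : V × Module.Dual K V) : Prop :=
  ∀ y ∈ R.dom, p.2 y • p.1 ∈ R.ker

/-- The string through `p` and `q` either passes through `R` or avoids it at both ends. In both
cases `R` is stable under the pair of rank one operators defined by `p` and `q`. -/
def Compatible (R : LinRel K V W) (p : V × Module.Dual K V) (q : W × Module.Dual K W) : Prop :=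
  R.Follows p q ∨ R.Avoids p ∧ R.swap.Avoids q

theorem Follows.swap (h : R.Follows p q) : R.swap.Follows q p :=
  ⟨h.mem, fun hzy => (h.eval hzy).symm⟩

theorem avoids_zero : R.Avoids 0 := fun _ _ => by simp

theorem avoids_of_mem_ker_or_dom_le_ker (h : p.1 ∈ R.ker ∨ R.dom ≤ LinearMap.ker p.2) :
    R.Avoids p := by
  intro y hy
  rcases h with h | h
  · exact R.ker.smul_mem _ h
  · have : p.2 y = 0 := h hy
    simp [this]

theorem Follows.avoids {W' : Type*} [AddCommGroup W'] [Module K W'] {S : LinRel K V W'}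
    (h : R.Follows p q) (hRS : S.dom ≤ R.ker ∨ R.dom ≤ S.ker) : S.Avoids p := by
  refine avoids_of_mem_ker_or_dom_le_ker ?_
  rcases hRS with hSR | hRS
  · exact .inr fun y hy => by simpa using h.eval (hSR hy)
  · exact .inl (hRS (mem_dom.2 ⟨q.1, h.mem⟩))

theorem Compatible.avoids_swap (h : R.Compatible 0 q) : R.swap.Avoids q := by
  rcases h with h | h
  · refine avoids_of_mem_ker_or_dom_le_ker (.inr fun z hz => ?_)
    obtain ⟨y, hzy⟩ := mem_dom.1 hz
    simpa using (h.eval (mem_swap.1 hzy)).symm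
  · exact h.2

theorem compatible_of_eq_bot_or_eq_top (h : R = ⊥ ∨ R = ⊤) : R.Compatible p q := by
  refine .inr ⟨fun y hy => ?_, fun z hz => ?_⟩ <;> rcases h with rfl | rfl
  · obtain ⟨z, hyz⟩ := mem_dom.1 hy
    simp_all
  · simp [mem_ker]
  · obtain ⟨y, hzy⟩ := mem_dom.1 hz
    simp_all [mem_swap]
  · simp [mem_ker, mem_swap]

theorem exists_dual_extending {η : Module.Dual K W} (hη : R.image N ≤ LinearMap.ker η) :
    ∃ ξ : Module.Dual K V, N ≤ LinearMap.ker ξ ∧ ∀ {y z}, (y, z) ∈ R → ξ y = η z := by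
  let fstMod : R →ₗ[K] V ⧸ N := N.mkQ ∘ₗ LinearMap.fst K V W ∘ₗ R.subtype
  let ηsnd : Module.Dual K R := η ∘ₗ LinearMap.snd K V W ∘ₗ R.subtype
  have hker : ηsnd ∈ (LinearMap.ker fstMod).dualAnnihilator := by
    rw [Submodule.mem_dualAnnihilator]
    rintro ⟨⟨y, z⟩, hyz⟩ hy
    have hyN : y ∈ N := by simpa [fstMod] using hy
    exact hη (mem_image.2 ⟨y, hyN, hyz⟩)
  rw [← LinearMap.range_dualMap_eq_dualAnnihilator_ker] at hker
  obtain ⟨g, hg⟩ := hker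
  refine ⟨g ∘ₗ N.mkQ, fun y hy => ?_, fun {y z} hyz => LinearMap.congr_fun hg ⟨(y, z), hyz⟩⟩
  simp [(Submodule.Quotient.mk_eq_zero N).2 hy]

theorem exists_separates_follows (hq : Separates (R.image N) (R.image L) q) :
    ∃ p, Separates N L p ∧ R.Follows p q := by
  obtain ⟨x, hxL, hx⟩ := mem_image.1 hq.mem
  obtain ⟨ξ, hξN, hξ⟩ := exists_dual_extending hq.le_ker
  exact ⟨(x, ξ), ⟨hxL, hξN, (hξ hx).trans hq.eval⟩, hx, hξ⟩

theorem Compatible.swap (h : R.Compatible p q) : R.swap.Compatible q p :=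
  h.imp Follows.swap And.symm

section Graph

variable {f : V →ₗ[K] W}

theorem dom_graph : dom f.graph = ⊤ := by
  ext y
  simp [mem_dom]

theorem ker_graph : ker f.graph = LinearMap.ker f := by
  ext y
  simp [mem_ker, eq_comm]

theorem dom_swap_graph : dom (swap f.graph) = LinearMap.range f := by
  ext z
  simp [mem_dom, mem_swap, eq_comm]

theorem ker_swap_graph : ker (swap f.graph) = ⊥ := by
  ext z
  simp [mem_ker, mem_swap]

theorem graph_eq_bot [Subsingleton V] : f.graph = ⊥ := by
  ext ⟨y, z⟩
  simp [Subsingleton.elim y 0]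

theorem swap_graph_eq_top [Subsingleton W] : swap f.graph = ⊤ := by
  ext ⟨z, y⟩
  simp [mem_swap, Subsingleton.elim z (f y)]

theorem Compatible.map_smul_eq (h : Compatible f.graph p q) (y : V) :
    f (p.2 y • p.1) = q.2 (f y) • q.1 := by
  rcases h with h | ⟨hp, hq⟩
  · have hy : (y, f y) ∈ f.graph := (LinearMap.mem_graph_iff f _).2 rfl
    rw [map_smul, ← (LinearMap.mem_graph_iff f _).1 h.mem, h.eval hy]
  · have hfp : p.2 y • p.1 ∈ ker f.graph := hp y (by simp [dom_graph])
    have hfq : q.2 (f y) • q.1 ∈ ker (LinRel.swap f.graph) := hq (f y) (by simp [dom_swap_graph])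
    rw [ker_graph, LinearMap.mem_ker] at hfp
    rw [ker_swap_graph, Submodule.mem_bot] at hfq
    rw [hfp, hfq]

theorem Compatible.map_eq_zero_or_eq (h : Compatible f.graph p q) (hp : p.2 p.1 = 1 ∨ p = 0) :
    f p.1 = 0 ∨ f p.1 = q.1 := by
  rcases h with h | ⟨havoids, -⟩
  · exact .inr ((LinearMap.mem_graph_iff f _).1 h.mem).symm
  · rcases hp with hp | rfl
    · have hker := havoids p.1 (by simp [dom_graph])
      rw [hp, one_smul, ker_graph] at hker
      exact .inl hker
    · exact .inl (map_zero f)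

end Graph

end LinRel

/-! ### Strings in a gentle family of relations -/

section Strings

/-- The adjacency relation of a quiver. -/
def HasArrow {I : Type*} [Quiver I] (i j : I) : Prop :=
  Nonempty (i ⟶ j)

variable {I : Type*} [Quiver I] {K : Type*} [Field K] {V : I → Type*} [∀ i, AddCommGroup (V i)]
  [∀ i, Module K (V i)]

/-- Linear relations along the arrows of a quiver in which no string passes through two arrows with
the same source or two arrows with the same target. With both arrows read away from their common
vertex, the domain of one relation is required to lie in the kernel of the other. -/
structure IsGentle (R : ∀ ⦃i j : I⦄, (i ⟶ j) → LinRel K (V i) (V j)) : Prop where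
  star : ∀ i, Pairwise fun a b : Quiver.Star i =>
    (R a.2).dom ≤ (R b.2).ker ∨ (R b.2).dom ≤ (R a.2).ker
  costar : ∀ j, Pairwise fun a b : Quiver.Costar j =>
    (R a.2).swap.dom ≤ (R b.2).swap.ker ∨ (R b.2).swap.dom ≤ (R a.2).swap.ker
  eq_bot_or_eq_top : ∀ ⦃i j : I⦄ (e : i ⟶ j), Subsingleton (V i) → R e = ⊥ ∨ R e = ⊤

/-- A string starting at `w`, encoded by the vector it passes through at each vertex and the
functional dual to it. No condition is imposed along the arrows ending at `w`, so that the string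
can be prolonged backwards. -/
structure IsString (R : ∀ ⦃i j : I⦄, (i ⟶ j) → LinRel K (V i) (V j)) (w : I)
    (p : ∀ i, V i × Module.Dual K (V i)) : Prop where
  eq_zero : ∀ i, ¬ Relation.ReflTransGen HasArrow w i → p i = 0
  normalized : ∀ i, (p i).2 (p i).1 = 1 ∨ p i = 0
  compatible : ∀ ⦃i j⦄ (e : i ⟶ j), j ≠ w → (R e).Compatible (p i) (p j)

variable {R : ∀ ⦃i j : I⦄, (i ⟶ j) → LinRel K (V i) (V j)} {w w' : I}

theorem isString_single [DecidableEq I] {q : V w × Module.Dual K (V w)} (hq : q.2 q.1 = 1)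
    (havoids : ∀ ⦃j⦄ (e : w ⟶ j), (R e).Avoids q) : IsString R w (Function.update 0 w q) where
  eq_zero i hi := by
    have hiw : i ≠ w := fun h => hi (h ▸ .refl)
    simp [hiw]
  normalized i := by
    rcases eq_or_ne i w with rfl | hiw
    · simp [hq]
    · simp [hiw]
  compatible i j e hj := by
    rw [Function.update_of_ne hj]
    refine .inr ⟨?_, LinRel.avoids_zero⟩
    rcases eq_or_ne i w with rfl | hiw
    · rw [Function.update_self]
      exact havoids e
    · rw [Function.update_of_ne hiw]
      exact LinRel.avoids_zero

theorem IsString.cons [DecidableEq I] (hI : ∀ i : I, ¬ Relation.TransGen HasArrow i i)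
    (hR : IsGentle R) {p : ∀ i, V i × Module.Dual K (V i)} (hp : IsString R w' p) (b : w ⟶ w')
    {q : V w × Module.Dual K (V w)} (hq : q.2 q.1 = 1) (hqp : (R b).Follows q (p w')) :
    IsString R w (Function.update p w q) where
  eq_zero i hi := by
    have hiw : i ≠ w := fun h => hi (h ▸ .refl)
    rw [Function.update_of_ne hiw]
    exact hp.eq_zero i fun h => hi (.head ⟨b⟩ h)
  normalized i := by
    rcases eq_or_ne i w with rfl | hiw
    · simp [hq]
    · simpa [hiw] using hp.normalized i
  compatible i j e hjw := by
    have eq_zero_of_arrow {k} (c : k ⟶ w') : p k = 0 :=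
      hp.eq_zero k fun h => hI w' (.tail' h ⟨c⟩)
    rw [Function.update_of_ne hjw]
    rcases eq_or_ne j w' with rfl | hjw'
    · by_cases heb : (⟨i, e⟩ : Quiver.Costar j) = ⟨w, b⟩
      · obtain ⟨rfl, heb⟩ := Sigma.mk.inj heb
        obtain rfl := eq_of_heq heb
        rw [Function.update_self]
        exact .inl hqp
      · refine .inr ⟨?_, hqp.swap.avoids (hR.costar j heb)⟩
        rcases eq_or_ne i w with rfl | hiw
        · rw [Function.update_self]
          have hne : (⟨j, e⟩ : Quiver.Star i) ≠ ⟨j, b⟩ := by simpa using heb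
          exact hqp.avoids (hR.star i hne)
        · rw [Function.update_of_ne hiw, eq_zero_of_arrow e]
          exact LinRel.avoids_zero
    · rcases eq_or_ne i w with rfl | hiw
      · rw [Function.update_self]
        have hcompat := hp.compatible e hjw'
        rw [eq_zero_of_arrow b] at hcompat
        have hne : (⟨j, e⟩ : Quiver.Star i) ≠ ⟨w', b⟩ := fun h => hjw' (congrArg Sigma.fst h)
        exact .inr ⟨hqp.avoids (hR.star i hne), hcompat.avoids_swap⟩
      · rw [Function.update_of_ne hiw]
        exact hp.compatible e hjw'

theorem exists_isString [Finite I] [∀ i j : I, Finite (i ⟶ j)]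
    (hI : ∀ i : I, ¬ Relation.TransGen HasArrow i i) (hR : IsGentle R) (w : I)
    {N L : Submodule K (V w)} (hNL : N ≤ L) (hLN : ¬ L ≤ N) :
    ∃ p, IsString R w p ∧ Separates N L (p w) := by
  classical
  induction w using (wellFounded_swap_of_acyclic hI).induction with | _ w ih
  -- If `L / N` survives along some arrow, the string continues there; otherwise it ends at `w`.
  by_cases h : ∃ (w' : I) (b : w ⟶ w'), ¬ (R b).image L ≤ (R b).image N
  · obtain ⟨w', b, hb⟩ := h
    obtain ⟨p, hp, hpw'⟩ := ih w' ⟨b⟩ (LinRel.image_mono hNL) hb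
    obtain ⟨q, hq, hqp⟩ := LinRel.exists_separates_follows hpw'
    exact ⟨_, hp.cons hI hR b hq.eval hqp, by simpa using hq⟩
  · push Not at h
    have : Finite (Quiver.Star w) := inferInstanceAs (Finite (Σ j, w ⟶ j))
    obtain ⟨q, hq, havoids⟩ := exists_separates_of_pairwise_le
      (fun a : Quiver.Star w => (R a.2).ker_le_dom) (hR.star w) hNL hLN
      fun a => LinRel.inf_dom_le_sup_ker (h a.1 a.2)
    exact ⟨_, isString_single hq.eval fun j e =>
      LinRel.avoids_of_mem_ker_or_dom_le_ker (havoids ⟨j, e⟩), by simpa using hq⟩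

theorem exists_compatible_of_nontrivial [Finite I] [∀ i j : I, Finite (i ⟶ j)]
    (hI : ∀ i : I, ¬ Relation.TransGen HasArrow i i) (hR : IsGentle R)
    (hV : ∃ i, Nontrivial (V i)) :
    ∃ p : ∀ i, V i × Module.Dual K (V i), (∃ i, (p i).2 (p i).1 = 1) ∧
      (∀ i, (p i).2 (p i).1 = 1 ∨ p i = 0) ∧ ∀ ⦃i j⦄ (e : i ⟶ j), (R e).Compatible (p i) (p j) := by
  obtain ⟨w, hw, hmin⟩ := (wellFounded_of_acyclic hI).has_min {i | Nontrivial (V i)} hV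
  rw [Set.mem_ofPred_eq] at hw
  obtain ⟨p, hp, hpw⟩ := exists_isString hI hR w bot_le
    (not_le_of_gt (bot_lt_top (α := Submodule K (V w))))
  refine ⟨p, ⟨w, hpw.eval⟩, hp.normalized, fun i j e => ?_⟩
  rcases eq_or_ne j w with rfl | hjw
  · have hi : Subsingleton (V i) := not_nontrivial_iff_subsingleton.1 fun h => hmin i h ⟨e⟩
    exact LinRel.compatible_of_eq_bot_or_eq_top (hR.eq_bot_or_eq_top e hi)
  · exact hp.compatible e hjw

end Strings

/-! ### Weights along exceptional routes -/

namespace DAG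

section Routes

variable {G : DAG}

variable (G) in
/-- The edge `f` starts where the edge `e` ends. -/
def Precedes (e f : G.E) : Prop :=
  G.tgt e = G.src f

theorem not_transGen_precedes (e : G.E) : ¬ Relation.TransGen G.Precedes e e := fun h =>
  G.acyclic (G.src e) (h.lift G.src fun e _ hef => ⟨e, rfl, hef⟩)

theorem exists_append_isSink {l : List G.E} (hne : l ≠ []) (hl : l.IsChain G.Precedes) :
    ∃ b, (l ++ b).IsChain G.Precedes ∧ G.IsSink (G.tgt ((l ++ b).getLast (by simp [hne]))) := by
  induction h : l.getLast hne using
    (wellFounded_swap_of_acyclic not_transGen_precedes).induction generalizing l with | _ e ih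
  by_cases hsink : G.IsSink (G.tgt e)
  · exact ⟨[], by simpa using hl, by simpa [h] using hsink⟩
  · obtain ⟨f, hf⟩ := not_forall_not.1 hsink
    have hchain : (l ++ [f]).IsChain G.Precedes := by
      rw [List.isChain_append]
      simp_all [List.getLast?_eq_some_getLast, Precedes]
    obtain ⟨b, hb, hlast⟩ := ih f hf.symm (by simp) hchain (by simp)
    exact ⟨f :: b, by simpa using hb, by simpa using hlast⟩

theorem exists_append_isSource {l : List G.E} (hne : l ≠ []) (hl : l.IsChain G.Precedes) :
    ∃ a, (a ++ l).IsChain G.Precedes ∧ G.IsSource (G.src ((a ++ l).head (by simp [hne]))) := by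
  induction h : l.head hne using
    (wellFounded_of_acyclic not_transGen_precedes).induction generalizing l with | _ e ih
  by_cases hsource : G.IsSource (G.src e)
  · exact ⟨[], by simpa using hl, by simpa [h] using hsource⟩
  · obtain ⟨f, hf⟩ := not_forall_not.1 hsource
    have hchain : (f :: l).IsChain G.Precedes := by
      rw [List.isChain_cons]
      simp_all [List.head?_eq_some_head, Precedes]
    obtain ⟨a, ha, hhead⟩ := ih f hf (by simp) hchain (by simp)
    exact ⟨a ++ [f], by simpa using ha, by simpa using hhead⟩

theorem exists_route_of_isChain {l : List G.E} (hne : l ≠ []) (hl : l.IsChain G.Precedes) :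
    ∃ (S : G.Route) (a b : List G.E), S.edges = a ++ (l ++ b) := by
  obtain ⟨b, hb, hsink⟩ := exists_append_isSink hne hl
  have hlb : l ++ b ≠ [] := by simp [hne]
  obtain ⟨a, ha, hsource⟩ := exists_append_isSource hlb hb
  refine ⟨⟨a ++ (l ++ b), by simp [hne], ha, hsource, ?_⟩, a, b, rfl⟩
  rwa [List.getLast_append_of_ne_nil _ hlb]

theorem Route.exists_edges_eq (R : G.Route) {e : G.E} (he : e ∈ R.edges)
    (hs : ¬ G.IsSource (G.src e)) (ht : ¬ G.IsSink (G.tgt e)) :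
    ∃ a p q b, R.edges = a ++ p :: e :: q :: b ∧ G.Precedes p e ∧ G.Precedes e q := by
  obtain ⟨l₁, l₂, hl⟩ := List.append_of_mem he
  have hchain : R.edges.IsChain G.Precedes := R.chain
  rcases l₁.eq_nil_or_concat' with rfl | ⟨a, p, rfl⟩
  · exact absurd (by simpa [hl] using R.source_start) hs
  rcases l₂ with _ | ⟨q, b⟩
  · exact absurd (by simpa [hl] using R.sink_end) ht
  · rw [hl, List.append_assoc, List.singleton_append, List.isChain_append_cons_cons,
      List.isChain_cons_cons] at hchain
    exact ⟨a, p, q, b, by simpa using hl, hchain.2.1, hchain.2.2.1⟩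

end Routes

section Framing

variable {G : DAG} {F : G.Framing}

theorem Framing.inlt_asymm {e f : G.E} (h : F.inlt e f) : ¬ F.inlt f e := fun h' =>
  F.inlt_irrefl e (F.inlt_trans h h')

theorem Framing.outlt_asymm {e f : G.E} (h : F.outlt e f) : ¬ F.outlt f e := fun h' =>
  F.outlt_irrefl e (F.outlt_trans h h')

theorem Exceptional.not_inlt_and_outlt {R : G.Route} (hR : G.Exceptional F R)
    {a m b : List G.E} {p p' q q' : G.E} (hE : R.edges = a ++ p :: (m ++ q :: b))
    (hp : G.tgt p' = G.tgt p) (hq : G.src q' = G.src q) :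
    ¬ (F.inlt p p' ∧ F.outlt q' q) ∧ ¬ (F.inlt p' p ∧ F.outlt q q') := by
  have hchain : (p :: m ++ [q]).IsChain G.Precedes := by
    have h : R.edges.IsChain G.Precedes := R.chain
    exact h.infix ⟨a, b, by simp [hE]⟩
  have hchain' : (p' :: m ++ [q']).IsChain G.Precedes := by
    have h : (p :: m ++ [q']).IsChain G.Precedes := by
      rw [List.isChain_append] at hchain ⊢
      exact ⟨hchain.1, by simp, by simpa [Precedes, hq] using hchain.2.2⟩
    exact h.imp_head (y := p') fun {e} (hpe : G.Precedes p e) => hp.trans hpe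
  obtain ⟨S, c, d, hS⟩ := exists_route_of_isChain (by simp) hchain'
  replace hE : R.edges = a ++ [p] ++ (m ++ q :: b) := by simp [hE]
  replace hS : S.edges = c ++ [p'] ++ (m ++ q' :: d) := by simp [hS]
  refine ⟨fun ⟨hin, hout⟩ => (hR S).1 ?_, fun ⟨hin, hout⟩ => (hR S).2 ?_⟩
  all_goals
    have hpp : p ≠ p' := by rintro rfl; exact F.inlt_irrefl _ hin
    have hqq : q ≠ q' := by rintro rfl; exact F.outlt_irrefl _ hout
  · exact ⟨G.tgt p, a, m ++ q :: b, c, m ++ q' :: d, p, p', hE, hS, rfl, hp, by simp, by simp,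
      ⟨a, c, [], p, p', hpp, rfl, rfl, hin⟩, ⟨m, d, b, q', q, hqq.symm, rfl, rfl, hout⟩⟩
  · exact ⟨G.tgt p, c, m ++ q' :: d, a, m ++ q :: b, p', p, hS, hE, hp, rfl, by simp, by simp,
      ⟨c, a, [], p', p, hpp.symm, rfl, rfl, hin⟩, ⟨m, b, d, q, q', hqq, rfl, rfl, hout⟩⟩

theorem Full.existsUnique_ne_tgt_eq (hfull : G.Full) {e : G.E} (he : G.IsInner (G.tgt e)) :
    ∃! f, f ≠ e ∧ G.tgt f = G.tgt e :=
  existsUnique_ne_of_card_fiber_eq_two (Nat.card_eq_fintype_card.trans (hfull _ he).1)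

theorem Full.existsUnique_ne_src_eq (hfull : G.Full) {e : G.E} (he : G.IsInner (G.src e)) :
    ∃! f, f ≠ e ∧ G.src f = G.src e :=
  existsUnique_ne_of_card_fiber_eq_two (Nat.card_eq_fintype_card.trans (hfull _ he).2)

theorem Full.minIn_iff_inlt (hfull : G.Full) {e f : G.E} (he : G.IsInner (G.tgt e)) (hne : f ≠ e)
    (hf : G.tgt f = G.tgt e) : G.MinIn F e ↔ F.inlt e f where
  mp h := h f hf hne
  mpr h _ hg hge := (hfull.existsUnique_ne_tgt_eq he).unique ⟨hge, hg⟩ ⟨hne, hf⟩ ▸ h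

theorem Full.minOut_iff_outlt (hfull : G.Full) {e f : G.E} (he : G.IsInner (G.src e)) (hne : f ≠ e)
    (hf : G.src f = G.src e) : G.MinOut F e ↔ F.outlt e f where
  mp h := h f hf hne
  mpr h _ hg hge := (hfull.existsUnique_ne_src_eq he).unique ⟨hge, hg⟩ ⟨hne, hf⟩ ▸ h

theorem Full.minIn_iff_not_minIn (hfull : G.Full) {e f : G.E} (he : G.IsInner (G.tgt e))
    (hne : f ≠ e) (hf : G.tgt f = G.tgt e) : G.MinIn F e ↔ ¬ G.MinIn F f := by
  rw [hfull.minIn_iff_inlt he hne hf, hfull.minIn_iff_inlt (hf ▸ he) hne.symm hf.symm]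
  exact ⟨F.inlt_asymm, (F.inlt_total e f hf.symm he hne.symm).resolve_right⟩

theorem Full.minOut_iff_not_minOut (hfull : G.Full) {e f : G.E} (he : G.IsInner (G.src e))
    (hne : f ≠ e) (hf : G.src f = G.src e) : G.MinOut F e ↔ ¬ G.MinOut F f := by
  rw [hfull.minOut_iff_outlt he hne hf, hfull.minOut_iff_outlt (hf ▸ he) hne.symm hf.symm]
  exact ⟨F.outlt_asymm, (F.outlt_total e f hf.symm he hne.symm).resolve_right⟩

theorem Exceptional.minIn_iff_minOut {R : G.Route} (hR : G.Exceptional F R) (hfull : G.Full)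
    {a m b : List G.E} {p q : G.E} (hE : R.edges = a ++ p :: (m ++ q :: b))
    (hp : G.IsInner (G.tgt p)) (hq : G.IsInner (G.src q)) : G.MinIn F p ↔ G.MinOut F q := by
  obtain ⟨p', ⟨hpp', hp'⟩, -⟩ := hfull.existsUnique_ne_tgt_eq hp
  obtain ⟨q', ⟨hqq', hq'⟩, -⟩ := hfull.existsUnique_ne_src_eq hq
  obtain ⟨h, h'⟩ := hR.not_inlt_and_outlt hE hp' hq'
  rw [hfull.minIn_iff_inlt hp hpp' hp', hfull.minOut_iff_outlt hq hqq' hq']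
  have hpTotal := F.inlt_total p p' hp'.symm hp hpp'.symm
  have hqTotal := F.outlt_total q q' hq'.symm hq hqq'.symm
  exact ⟨fun hin => hqTotal.resolve_right fun hout => h ⟨hin, hout⟩,
    fun hout => hpTotal.resolve_right fun hin => h' ⟨hin, hout⟩⟩

theorem Full.not_idle (hfull : G.Full) {e : G.E} (hs : G.IsInner (G.src e))
    (ht : G.IsInner (G.tgt e)) : ¬ G.Idle e := by
  rintro (⟨-, hidle⟩ | ⟨-, hidle⟩)
  · obtain ⟨f, ⟨hfe, hf⟩, -⟩ := hfull.existsUnique_ne_tgt_eq ht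
    exact hfe (hidle f hf)
  · obtain ⟨f, ⟨hfe, hf⟩, -⟩ := hfull.existsUnique_ne_src_eq hs
    exact hfe (hidle f hf)

theorem Ample.minOut_iff_minIn (hample : G.Ample F) (hfull : G.Full) {e : G.E}
    (hs : G.IsInner (G.src e)) (ht : G.IsInner (G.tgt e)) : G.MinOut F e ↔ G.MinIn F e := by
  obtain ⟨R, hR, heR⟩ := hample e (hfull.not_idle hs ht)
  obtain ⟨a, p, q, b, hE, hpe, heq⟩ := R.exists_edges_eq heR hs.1 ht.2
  have hp : G.IsInner (G.tgt p) := hpe ▸ hs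
  have hq : G.IsInner (G.src q) := heq ▸ ht
  calc G.MinOut F e
    _ ↔ G.MinIn F p := (hR.minIn_iff_minOut (m := []) hfull hE hp hs).symm
    _ ↔ G.MinOut F q := hR.minIn_iff_minOut (m := [e]) hfull hE hp hq
    _ ↔ G.MinIn F e :=
      (hR.minIn_iff_minOut (a := a ++ [p]) (m := []) (b := b) hfull (by simp [hE]) ht hq).symm

theorem Ample.weight_eq_one_iff_minOut (hample : G.Ample F) (hfull : G.Full) {e : G.E}
    (hs : G.IsInner (G.src e)) (ht : G.IsInner (G.tgt e)) :
    G.weight F e = 1 ↔ G.MinOut F e := by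
  simp [weight, hs, ht, hample.minOut_iff_minIn hfull hs ht]

theorem Ample.weight_eq_one_iff_minIn (hample : G.Ample F) (hfull : G.Full) {e : G.E}
    (hs : G.IsInner (G.src e)) (ht : G.IsInner (G.tgt e)) :
    G.weight F e = 1 ↔ G.MinIn F e :=
  (hample.weight_eq_one_iff_minOut hfull hs ht).trans (hample.minOut_iff_minIn hfull hs ht)

theorem Ample.weight_eq_one_iff_of_src_eq (hample : G.Ample F) (hfull : G.Full) {e f : G.E}
    (hs : G.IsInner (G.src e)) (hte : G.IsInner (G.tgt e)) (htf : G.IsInner (G.tgt f))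
    (hne : f ≠ e) (hf : G.src f = G.src e) : G.weight F e = 1 ↔ G.weight F f ≠ 1 := by
  rw [ne_eq, hample.weight_eq_one_iff_minOut hfull hs hte,
    hample.weight_eq_one_iff_minOut hfull (hf ▸ hs) htf, hfull.minOut_iff_not_minOut hs hne hf]

theorem Ample.weight_eq_one_iff_of_tgt_eq (hample : G.Ample F) (hfull : G.Full) {e f : G.E}
    (hse : G.IsInner (G.src e)) (hsf : G.IsInner (G.src f)) (ht : G.IsInner (G.tgt e))
    (hne : f ≠ e) (hf : G.tgt f = G.tgt e) : G.weight F e = 1 ↔ G.weight F f ≠ 1 := by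
  rw [ne_eq, hample.weight_eq_one_iff_minIn hfull hse ht,
    hample.weight_eq_one_iff_minIn hfull hsf (hf ▸ ht), hfull.minIn_iff_not_minIn ht hne hf]

end Framing

end DAG

/-! ### Modules as families of linear relations -/

namespace DAG

variable {G : DAG} {F : G.Framing} {K : Type} [Field K]

instance : Finite G.InnerV :=
  inferInstanceAs (Finite {v : G.V // G.IsInner v})

/-- The inner vertices with the edges of `G` between them, all oriented as in `G`. -/
instance : Quiver G.InnerV where
  Hom i j := {e : G.E // G.src e = i.1 ∧ G.tgt e = j.1}

instance (i j : G.InnerV) : Finite (i ⟶ j) :=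
  inferInstanceAs (Finite {e : G.E // G.src e = i.1 ∧ G.tgt e = j.1})

theorem not_transGen_hasArrow (i : G.InnerV) : ¬ Relation.TransGen HasArrow i i := fun h =>
  G.acyclic i.1 (h.lift Subtype.val fun _ _ ⟨e⟩ => ⟨e.1, e.2⟩)

section Arrows

variable {i j : G.InnerV} (e : i ⟶ j)

theorem isInner_src : G.IsInner (G.src e.1) := e.2.1.symm ▸ i.2

theorem isInner_tgt : G.IsInner (G.tgt e.1) := e.2.2.symm ▸ j.2

variable {e}

theorem arrowSrc_eq_left (he : G.weight F e.1 = 1) :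
    G.arrowSrc F e.1 (isInner_src e) (isInner_tgt e) = i :=
  (if_pos he).trans (Subtype.ext e.2.1)

theorem arrowTgt_eq_right (he : G.weight F e.1 = 1) :
    G.arrowTgt F e.1 (isInner_src e) (isInner_tgt e) = j :=
  (if_pos he).trans (Subtype.ext e.2.2)

theorem arrowSrc_eq_right (he : G.weight F e.1 ≠ 1) :
    G.arrowSrc F e.1 (isInner_src e) (isInner_tgt e) = j :=
  (if_neg he).trans (Subtype.ext e.2.2)

theorem arrowTgt_eq_left (he : G.weight F e.1 ≠ 1) :
    G.arrowTgt F e.1 (isInner_src e) (isInner_tgt e) = i :=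
  (if_neg he).trans (Subtype.ext e.2.1)

end Arrows

namespace Rep

variable (M : G.Rep F K)

/-- The map of a representation along an edge, transported along equalities that identify its
source and target. -/
noncomputable def mapCast (e : G.E) (hs : G.IsInner (G.src e)) (ht : G.IsInner (G.tgt e))
    {i j : G.InnerV} (hi : G.arrowSrc F e hs ht = i) (hj : G.arrowTgt F e hs ht = j) :
    M.space i →ₗ[K] M.space j := by
  subst hi hj
  exact M.map e hs ht

theorem mapCast_comp_mapCast {e f : G.E} {hse : G.IsInner (G.src e)} {hte : G.IsInner (G.tgt e)}
    {hsf : G.IsInner (G.src f)} {htf : G.IsInner (G.tgt f)} {i j k : G.InnerV}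
    (hi : G.arrowSrc F e hse hte = i) (hj : G.arrowTgt F e hse hte = j)
    (hj' : G.arrowSrc F f hsf htf = j) (hk : G.arrowTgt F f hsf htf = k)
    (hw : G.weight F e ≠ G.weight F f) :
    M.mapCast f hsf htf hj' hk ∘ₗ M.mapCast e hse hte hi hj = 0 := by
  have mapCast_apply {k} (h : G.arrowTgt F e hse hte = k) (x : M.space (G.arrowSrc F e hse hte)) :
      M.mapCast e hse hte rfl h x = cast (congrArg M.space h) (M.map e hse hte x) := by
    subst h
    rfl
  subst hi hk hj'
  ext x
  rw [LinearMap.comp_apply, mapCast_apply hj]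
  exact M.rel e f hse hte hsf htf hj hw x

open Classical in
/-- The linear relation carried by an edge of `G`: the graph of the map of the representation, or
its inverse if the arrow of `Λ(G)` is the reversed edge. -/
noncomputable def edgeRel {i j : G.InnerV} (e : i ⟶ j) : LinRel K (M.space i) (M.space j) :=
  if he : G.weight F e.1 = 1 then
    (M.mapCast e.1 _ _ (arrowSrc_eq_left he) (arrowTgt_eq_right he)).graph
  else
    LinRel.swap (M.mapCast e.1 _ _ (arrowSrc_eq_right he) (arrowTgt_eq_left he)).graph

variable {M}

theorem edgeRel_of_weight_eq_one {i j : G.InnerV} {e : i ⟶ j} (he : G.weight F e.1 = 1) :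
    M.edgeRel e = (M.mapCast e.1 _ _ (arrowSrc_eq_left he) (arrowTgt_eq_right he)).graph :=
  dif_pos he

theorem edgeRel_of_weight_ne_one {i j : G.InnerV} {e : i ⟶ j} (he : G.weight F e.1 ≠ 1) :
    M.edgeRel e =
      LinRel.swap (M.mapCast e.1 _ _ (arrowSrc_eq_right he) (arrowTgt_eq_left he)).graph :=
  dif_neg he

theorem dom_edgeRel_le_ker {i j k : G.InnerV} {e : i ⟶ j} {f : i ⟶ k}
    (he : G.weight F e.1 ≠ 1) (hf : G.weight F f.1 = 1) :
    (M.edgeRel e).dom ≤ (M.edgeRel f).ker := by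
  rw [edgeRel_of_weight_ne_one he, edgeRel_of_weight_eq_one hf, LinRel.dom_swap_graph,
    LinRel.ker_graph, LinearMap.range_le_ker_iff]
  exact M.mapCast_comp_mapCast _ _ _ _ fun h => he (h.trans hf)

theorem dom_swap_edgeRel_le_ker {i j k : G.InnerV} {e : i ⟶ k} {f : j ⟶ k}
    (he : G.weight F e.1 = 1) (hf : G.weight F f.1 ≠ 1) :
    (M.edgeRel e).swap.dom ≤ (M.edgeRel f).swap.ker := by
  rw [edgeRel_of_weight_eq_one he, edgeRel_of_weight_ne_one hf, LinRel.dom_swap_graph,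
    LinRel.swap_swap, LinRel.ker_graph, LinearMap.range_le_ker_iff]
  exact M.mapCast_comp_mapCast _ _ _ _ fun h => hf (h.symm.trans he)

theorem isGentle_edgeRel (M : G.Rep F K) (hfull : G.Full) (hample : G.Ample F) :
    IsGentle fun _ _ => M.edgeRel where
  star i := by
    rintro ⟨j, e⟩ ⟨k, f⟩ hne
    have hne' : f.1 ≠ e.1 := fun h => hne <| by
      obtain rfl : j = k := Subtype.ext (e.2.2.symm.trans (h ▸ f.2.2))
      rw [Subtype.ext h]
    have hw := hample.weight_eq_one_iff_of_src_eq hfull (isInner_src e) (isInner_tgt e)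
      (isInner_tgt f) hne' (f.2.1.trans e.2.1.symm)
    by_cases he : G.weight F e.1 = 1
    · exact .inr (dom_edgeRel_le_ker (hw.1 he) he)
    · exact .inl (dom_edgeRel_le_ker he (not_not.1 (mt hw.2 he)))
  costar k := by
    rintro ⟨i, e⟩ ⟨j, f⟩ hne
    have hne' : f.1 ≠ e.1 := fun h => hne <| by
      obtain rfl : i = j := Subtype.ext (e.2.1.symm.trans (h ▸ f.2.1))
      rw [Subtype.ext h]
    have hw := hample.weight_eq_one_iff_of_tgt_eq hfull (isInner_src e) (isInner_src f)
      (isInner_tgt e) hne' (f.2.2.trans e.2.2.symm)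
    by_cases he : G.weight F e.1 = 1
    · exact .inl (dom_swap_edgeRel_le_ker he (hw.1 he))
    · exact .inr (dom_swap_edgeRel_le_ker (not_not.1 (mt hw.2 he)) he)
  eq_bot_or_eq_top i j e hi := by
    by_cases he : G.weight F e.1 = 1
    · exact .inl ((edgeRel_of_weight_eq_one he).trans LinRel.graph_eq_bot)
    · exact .inr ((edgeRel_of_weight_ne_one he).trans LinRel.swap_graph_eq_top)

theorem compatible_graph_map {p : ∀ v, M.space v × Module.Dual K (M.space v)}
    (hp : ∀ ⦃i j : G.InnerV⦄ (e : i ⟶ j), (M.edgeRel e).Compatible (p i) (p j)) (e : G.E)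
    (hs : G.IsInner (G.src e)) (ht : G.IsInner (G.tgt e)) :
    LinRel.Compatible (M.map e hs ht).graph (p (G.arrowSrc F e hs ht))
      (p (G.arrowTgt F e hs ht)) := by
  by_cases he : G.weight F e = 1
  · let a : G.arrowSrc F e hs ht ⟶ G.arrowTgt F e hs ht :=
      ⟨e, by simp [arrowSrc, he], by simp [arrowTgt, he]⟩
    have h := hp a
    rwa [edgeRel_of_weight_eq_one (e := a) he] at h
  · let a : G.arrowTgt F e hs ht ⟶ G.arrowSrc F e hs ht :=
      ⟨e, by simp [arrowTgt, he], by simp [arrowSrc, he]⟩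
    have h := (hp a).swap
    rwa [edgeRel_of_weight_ne_one (e := a) he] at h

/-- A choice of a vector and a functional at every vertex that exhibits `M` as a string module:
the vectors span, and every arrow either kills the vector at its source or sends it to the vector
at its target. -/
structure IsStringBasis (M : G.Rep F K) (p : ∀ v, M.space v × Module.Dual K (M.space v)) :
    Prop where
  smul_eq : ∀ v y, (p v).2 y • (p v).1 = y
  map_eq : ∀ e hs ht, M.map e hs ht (p _).1 = 0 ∨ M.map e hs ht (p _).1 = (p _).1

/-- The vertices and the arrows at which the vectors of a string basis vanish. -/
def stringShape (M : G.Rep F K) (p : ∀ v, M.space v × Module.Dual K (M.space v)) :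
    Set G.InnerV × Set {e : G.E // G.IsInner (G.src e) ∧ G.IsInner (G.tgt e)} :=
  ({v | (p v).1 = 0}, {e | M.map e.1 e.2.1 e.2.2 (p _).1 = 0})

theorem IsStringBasis.repIso {N : G.Rep F K} {p : ∀ v, M.space v × Module.Dual K (M.space v)}
    {q : ∀ v, N.space v × Module.Dual K (N.space v)} (hp : M.IsStringBasis p)
    (hq : N.IsStringBasis q) (hpq : M.stringShape p = N.stringShape q) : RepIso M N := by
  have hzero v : (p v).1 = 0 ↔ (q v).1 = 0 := Set.ext_iff.1 (congrArg Prod.fst hpq) v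
  have hmap e hs ht : M.map e hs ht (p _).1 = 0 ↔ N.map e hs ht (q _).1 = 0 :=
    Set.ext_iff.1 (congrArg Prod.snd hpq) ⟨e, hs, ht⟩
  have hpq v : (p v).2.smulRight (q v).1 (p v).1 = (q v).1 :=
    smulRight_apply_of_eq_zero_iff (hp.smul_eq v) (hzero v)
  have hqp v : (q v).2.smulRight (p v).1 (q v).1 = (p v).1 :=
    smulRight_apply_of_eq_zero_iff (hq.smul_eq v) (hzero v).symm
  refine ⟨⟨fun v => (p v).2.smulRight (q v).1, fun e hs ht y => ?_⟩, fun v => ?_⟩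
  · rw [← hp.smul_eq _ y]
    simp only [map_smul, hpq]
    congr 1
    rcases hp.map_eq e hs ht with h | h
    · rw [h, map_zero, (hmap e hs ht).1 h]
    · rw [h, hpq]
      rcases hq.map_eq e hs ht with h' | h'
      · rw [h', ← hzero, ← h, hmap, h']
      · exact h'.symm
  · refine Function.bijective_iff_has_inverse.2
      ⟨(q v).2.smulRight (p v).1, fun y => ?_, fun z => ?_⟩
    · rw [← hp.smul_eq v y, map_smul, map_smul, hpq, hqp]
    · rw [← hq.smul_eq v z, map_smul, map_smul, hqp, hpq]

end Rep

theorem Indecomposable.exists_isStringBasis {M : G.Rep F K} (hM : Indecomposable M)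
    (hfull : G.Full) (hample : G.Ample F) : ∃ p, M.IsStringBasis p := by
  obtain ⟨⟨v, x, hx⟩, hidem⟩ := hM
  obtain ⟨p, ⟨w, hw⟩, hnorm, hcompat⟩ := exists_compatible_of_nontrivial not_transGen_hasArrow
    (M.isGentle_edgeRel hfull hample) ⟨v, nontrivial_of_ne x 0 hx⟩
  have hmap := Rep.compatible_graph_map hcompat
  let φ : RepHom M M :=
    { app := fun v => (p v).2.smulRight (p v).1
      comm := fun e hs ht y => ((hmap e hs ht).map_smul_eq y).symm }
  refine ⟨p, ((hidem φ fun v y => ?_).resolve_left fun hzero => ?_),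
    fun e hs ht => (hmap e hs ht).map_eq_zero_or_eq (hnorm _)⟩
  · rcases hnorm v with h | h <;> simp [φ, h]
  · have hpw : (p w).1 = 0 := by simpa [φ, hw] using hzero w (p w).1
    simp [hpw] at hw

end DAG

theorem gentle_algebra_finite_type_general (G : DAG) (F : G.Framing) (hfull : G.Full)
    (hample : G.Ample F) (K : Type) [Field K] :
    Finite (Quot (fun M N : {M : G.Rep F K // DAG.Indecomposable M} =>
        DAG.RepIso M.1 N.1)) ∧
    ∀ M : G.Rep F K, DAG.Indecomposable M →
      ∀ v : G.InnerV, Module.finrank K (M.space v) ≤ 1 := by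
  refine ⟨?_, fun M hM v => ?_⟩
  · choose p hp using fun M : {M : G.Rep F K // DAG.Indecomposable M} =>
      M.2.exists_isStringBasis hfull hample
    exact finite_quot_of_invariant (fun M => M.1.stringShape (p M)) fun M N h =>
      (hp M).repIso (hp N) h
  · obtain ⟨p, hp⟩ := hM.exists_isStringBasis hfull hample
    exact finrank_le_one (p v).1 fun y => ⟨(p v).2 y, hp.smul_eq v y⟩

/-- For a full DAG `G` with a fixed ample framing, the gentle
algebra `Λ(G)` is of finite representation type (finitely many isomorphism
classes of indecomposable modules), and every indecomposable `Λ(G)`-module has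
dimension at most one at every vertex of the quiver. -/
theorem gentle_algebra_finite_type (G : DAG) (F : G.Framing)
    (hfull : G.Full) (hample : G.Ample F)
    (K : Type) [Field K] [IsAlgClosed K] :
    Finite (Quot (fun M N : {M : G.Rep F K // DAG.Indecomposable M} =>
        DAG.RepIso M.1 N.1)) ∧
    ∀ M : G.Rep F K, DAG.Indecomposable M →
      ∀ v : G.InnerV, Module.finrank K (M.space v) ≤ 1 :=
  gentle_algebra_finite_type_general G F hfull hample K
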